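/- arXiv:2201.05642 — 2 statements merged into one kernel-verified Lean document; each statement's English description precedes it below -/
import Mathlib

section
/- Let p be a prime and let a, b be positive integers with k = max(a,b) and l = min(a,b). Then p^{l-1}((k-l)(p-1) + p + 1) ≥ (p-1)(a+b-2) + p + 1. -/
/-!
Let `k = max a b`, `l = min a b` and `C = (k - l) (p - 1) + p + 1`. The right-hand side is
`C + 2 (l - 1) (p - 1)`, because `a + b - 2 = 2 (l - 1) + (k - l)`. By Bernoulli's inequality the
left-hand side `p ^ (l - 1) * C` is at least `C + (l - 1) (p - 1) C`, and `C ≥ p + 1 ≥ 2`.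
-/

theorem add_sub_two_eq_two_mul_min_sub_one_add {a b : ℕ} (ha : 1 ≤ a) (hb : 1 ≤ b) :
    a + b - 2 = 2 * (min a b - 1) + (max a b - min a b) := by
  omega

section OrderedSemiring

variable {R : Type*} [Semiring R] [PartialOrder R] [IsOrderedRing R]

theorem one_add_mul_le_one_add_pow_of_nonneg {x : R} (hx : 0 ≤ x) (n : ℕ) :
    1 + n * x ≤ (1 + x) ^ n :=
  have one_add_nonneg : 0 ≤ 1 + x := add_nonneg zero_le_one hx
  one_add_mul_le_pow_of_sq_nonneg (pow_nonneg hx 2) (pow_nonneg one_add_nonneg 2)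
    (add_nonneg zero_le_two hx) n

theorem mul_mul_add_le_one_add_pow_mul {x r C : R} (hx : 0 ≤ x) (hrC : r ≤ C) (hC : 0 ≤ C)
    (n : ℕ) : n * x * r + C ≤ (1 + x) ^ n * C :=
  calc
    n * x * r + C ≤ n * x * C + C := by gcongr
    _ = (1 + n * x) * C := by rw [add_mul, one_mul, add_comm]
    _ ≤ (1 + x) ^ n * C := by gcongr; exact one_add_mul_le_one_add_pow_of_nonneg hx n

theorem mul_two_mul_add_le_add_one_pow_mul {q : R} (hq : 0 ≤ q) (m d : ℕ) :
    q * (2 * m + d : ℕ) + (q + 1) + 1 ≤ (q + 1) ^ m * (d * q + (q + 1) + 1) := by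
  have two_le : 2 ≤ d * q + (q + 1) + 1 := by
    rw [← one_add_one_eq_two]
    gcongr
    exact le_add_of_nonneg_of_le (by positivity) (le_add_of_nonneg_left hq)
  calc
    q * (2 * m + d : ℕ) + (q + 1) + 1 = m * q * 2 + (d * q + (q + 1) + 1) := by
      rw [← Nat.cast_comm, Nat.cast_add, two_mul, Nat.cast_add, add_mul, add_mul, mul_two]
      simp only [add_assoc]
    _ ≤ (1 + q) ^ m * (d * q + (q + 1) + 1) :=
      mul_mul_add_le_one_add_pow_mul hq two_le (zero_le_two.trans two_le) m
    _ = (q + 1) ^ m * (d * q + (q + 1) + 1) := by rw [add_comm 1 q]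

-- `q` stands for `p - 1`, so that `R` may be `ℕ` as well as an ordered ring.
theorem stmt3_general {p q : R} (hpq : q + 1 = p) (hq : 0 ≤ q) {a b : ℕ} (ha : 1 ≤ a)
    (hb : 1 ≤ b) :
    p ^ (min a b - 1) * ((max a b - min a b : ℕ) * q + p + 1) ≥
      q * (a + b - 2 : ℕ) + p + 1 := by
  subst hpq
  rw [add_sub_two_eq_two_mul_min_sub_one_add ha hb]
  exact mul_two_mul_add_le_add_one_pow_mul hq _ _

end OrderedSemiring

theorem stmt3 {p a b : ℕ} (hp : p.Prime) (ha : 1 ≤ a) (hb : 1 ≤ b) :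
    p ^ (min a b - 1) * ((max a b - min a b) * (p - 1) + p + 1) ≥
      (p - 1) * (a + b - 2) + p + 1 :=
  stmt3_general (Nat.sub_add_cancel hp.one_le) (Nat.zero_le _) ha hb
end

section
/- Let G be a finite group and N a normal subgroup. Then the number of conjugacy classes of maximal cyclic subgroups of G is at least the number of conjugacy classes of maximal cyclic subgroups of G/N. -/
def IsMaximalCyclic {G : Type*} [Group G] (H : Subgroup G) : Prop :=
  IsCyclic H ∧ ∀ K : Subgroup G, IsCyclic K → H ≤ K → H = K

/-- The conjugacy class of a subgroup. -/
def conjClass {G : Type*} [Group G] (H : Subgroup G) : Set (Subgroup G) :=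
  {K | ∃ g : G, K = H.map (MulAut.conj g).toMonoidHom}

/-- The number of conjugacy classes of maximal cyclic subgroups of `G`. -/
noncomputable def eta (G : Type*) [Group G] : ℕ :=
  (conjClass '' {H : Subgroup G | IsMaximalCyclic H}).ncard

/-!
Let `f : G →* H` be surjective and let `f x` generate a maximal cyclic subgroup `M` of `H`. If `C`
is a maximal cyclic subgroup of `G` containing `x`, its image is cyclic and contains `M`, hence is
`M`. Since `f` also carries conjugacy classes onto conjugacy classes, the classes of maximal cyclic
subgroups of `H` are all images of such classes of `G`.
-/

theorem isMaximalCyclic_iff_maximal {G : Type*} [Group G] {C : Subgroup G} :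
    IsMaximalCyclic C ↔ Maximal (fun K : Subgroup G => IsCyclic K) C :=
  (maximal_iff (P := fun K : Subgroup G => IsCyclic K)).symm

theorem exists_isMaximalCyclic_mem {G : Type*} [Group G] [WellFoundedGT (Subgroup G)] (g : G) :
    ∃ C : Subgroup G, IsMaximalCyclic C ∧ g ∈ C := by
  obtain ⟨C, hgC, hC⟩ := exists_maximal_ge_of_wellFoundedGT
    (fun K : Subgroup G => IsCyclic K) (Subgroup.zpowers g) (Subgroup.isCyclic_zpowers g)
  exact ⟨C, isMaximalCyclic_iff_maximal.2 hC, Subgroup.zpowers_le.1 hgC⟩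

section Map

variable {G H : Type*} [Group G] [Group H] (f : G →* H)

theorem map_map_conj (C : Subgroup G) (g : G) :
    (C.map (MulAut.conj g).toMonoidHom).map f =
      (C.map f).map (MulAut.conj (f g)).toMonoidHom := by
  have conj_comm : f.comp (MulAut.conj g).toMonoidHom =
      (MulAut.conj (f g)).toMonoidHom.comp f := by
    ext; simp
  rw [Subgroup.map_map, Subgroup.map_map, conj_comm]

variable {f}

theorem image_map_conjClass (hf : Function.Surjective f) (C : Subgroup G) :
    Subgroup.map f '' conjClass C = conjClass (C.map f) := by
  ext K
  constructor
  · rintro ⟨_, ⟨g, rfl⟩, rfl⟩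
    exact ⟨f g, map_map_conj f C g⟩
  · rintro ⟨h, rfl⟩
    obtain ⟨g, rfl⟩ := hf h
    exact ⟨_, ⟨g, rfl⟩, map_map_conj f C g⟩

theorem IsMaximalCyclic.exists_map_eq (hf : Function.Surjective f)
    (hG : ∀ g : G, ∃ C : Subgroup G, IsMaximalCyclic C ∧ g ∈ C)
    {M : Subgroup H} (hM : IsMaximalCyclic M) :
    ∃ C : Subgroup G, IsMaximalCyclic C ∧ C.map f = M := by
  obtain ⟨y, rfl⟩ := M.isCyclic_iff_exists_zpowers_eq_top.1 hM.1
  obtain ⟨x, rfl⟩ := hf y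
  obtain ⟨C, hC, hxC⟩ := hG x
  have cyclic : IsCyclic C := hC.1
  have map_cyclic : IsCyclic (C.map f) :=
    isCyclic_of_surjective (f.subgroupMap C) (f.subgroupMap_surjective C)
  have le_map : Subgroup.zpowers (f x) ≤ C.map f :=
    Subgroup.zpowers_le.2 (Subgroup.mem_map_of_mem f hxC)
  exact ⟨C, hC, (hM.2 _ map_cyclic le_map).symm⟩

theorem stmt12_general (hf : Function.Surjective f)
    (hG : ∀ g : G, ∃ C : Subgroup G, IsMaximalCyclic C ∧ g ∈ C)
    (hfin : (conjClass '' {C : Subgroup G | IsMaximalCyclic C}).Finite) :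
    eta G ≥ eta H := by
  have classes_subset : conjClass '' {M : Subgroup H | IsMaximalCyclic M} ⊆
      Set.image (Subgroup.map f) '' (conjClass '' {C : Subgroup G | IsMaximalCyclic C}) := by
    rintro _ ⟨M, hM, rfl⟩
    obtain ⟨C, hC, rfl⟩ := hM.exists_map_eq hf hG
    exact ⟨conjClass C, ⟨C, hC, rfl⟩, image_map_conjClass hf C⟩
  exact (Set.ncard_le_ncard classes_subset (hfin.image _)).trans (Set.ncard_image_le hfin)

end Map

theorem stmt12 {G : Type*} [Group G] [Finite G] (N : Subgroup G) [N.Normal] :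
    eta G ≥ eta (G ⧸ N) :=
  stmt12_general (QuotientGroup.mk'_surjective N) exists_isMaximalCyclic_mem (Set.toFinite _)
end
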